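/- Let p be a prime. There is an injective GL₂(𝔽_p)-equivariant linear map ι : V_{p−1} → V_{2p−2}/V*_{2p−2} with ι(X^{p−1}) equal to the class of X^{2p−2}, and the quotient (V_{2p−2}/V*_{2p−2})/ι(V_{p−1}) is isomorphic as a GL₂(𝔽_p)-representation to the trivial representation V_0; in other words there is a short exact sequence of GL₂(𝔽_p)-representations 0 → V_{p−1} → V_{2p−2}/V*_{2p−2} → V_0 → 0. -/

import Mathlib

/-!
Common setup: the symmetric power representations `V_r` of `GL₂(𝔽_p)` realized as
homogeneous polynomials of degree `r` in `𝔽_p[X,Y]` with the action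
`([[a,b],[c,d]]·P)(X,Y) = P(aX+cY, bX+dY)`, the subrepresentation `V_r*` of polynomials
divisible by `X^p Y − X Y^p`, and the quotient representation `V_{2p−2}/V*_{2p−2}`.
-/

set_option synthInstance.maxHeartbeats 1000000
set_option maxHeartbeats 1000000

open MvPolynomial

variable (p : ℕ) [Fact p.Prime]

/-- The action of a 2×2 matrix `M = [[a,b],[c,d]]` on polynomials:
`(M·P)(X,Y) = P(aX+cY, bX+dY)`; the variable `X i` is sent to `Σ_j M j i • X j`. -/
noncomputable def polyAct (M : Matrix (Fin 2) (Fin 2) (ZMod p)) :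
    MvPolynomial (Fin 2) (ZMod p) →ₗ[ZMod p] MvPolynomial (Fin 2) (ZMod p) :=
  (aeval fun i => ∑ j, C (M j i) * X j).toLinearMap

/-- `V_r`: homogeneous polynomials of degree r in 𝔽_p[X,Y]. -/
noncomputable def Vpoly (r : ℕ) : Submodule (ZMod p) (MvPolynomial (Fin 2) (ZMod p)) :=
  homogeneousSubmodule (Fin 2) (ZMod p) r

lemma polyAct_mem (M : Matrix (Fin 2) (Fin 2) (ZMod p)) {r : ℕ}
    {P : MvPolynomial (Fin 2) (ZMod p)} (hP : P ∈ Vpoly p r) :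
    polyAct p M P ∈ Vpoly p r := by
  rw [Vpoly, mem_homogeneousSubmodule] at hP ⊢
  have h := hP.aeval (g := fun i => ∑ j, C (M j i) * X j) (n := 1) ?_
  · rw [one_mul] at h; exact h
  · intro i
    apply MvPolynomial.IsHomogeneous.sum
    intro j _
    simpa using (isHomogeneous_C (Fin 2) (M j i)).mul (isHomogeneous_X (ZMod p) j)

/-- `V_r*`: elements of `V_r` divisible by `X^p Y − X Y^p`. -/
noncomputable def VpolyStar (r : ℕ) : Submodule (ZMod p) (MvPolynomial (Fin 2) (ZMod p)) :=
  Vpoly p r ⊓ Submodule.restrictScalars (ZMod p)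
    (Ideal.span {(X 0 : MvPolynomial (Fin 2) (ZMod p)) ^ p * X 1 - X 0 * X 1 ^ p})

lemma frob (a c : ZMod p) : (C a * X 0 + C c * X 1 : MvPolynomial (Fin 2) (ZMod p)) ^ p
    = C a * X 0 ^ p + C c * X 1 ^ p := by
  have : (C a * X 0 + C c * X 1 : MvPolynomial (Fin 2) (ZMod p)) ^ p
      = (C a * X 0) ^ p + (C c * X 1) ^ p := add_pow_char _ _ _
  rw [this, mul_pow, mul_pow, ← C_pow, ← C_pow, ZMod.pow_card, ZMod.pow_card]

lemma polyAct_det (M : Matrix (Fin 2) (Fin 2) (ZMod p)) :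
    polyAct p M ((X 0 : MvPolynomial (Fin 2) (ZMod p)) ^ p * X 1 - X 0 * X 1 ^ p)
      = C (M 0 0 * M 1 1 - M 1 0 * M 0 1) *
        ((X 0 : MvPolynomial (Fin 2) (ZMod p)) ^ p * X 1 - X 0 * X 1 ^ p) := by
  have h0 : polyAct p M (X 0) = C (M 0 0) * X 0 + C (M 1 0) * X 1 := by
    simp [polyAct, Fin.sum_univ_two]
  have h1 : polyAct p M (X 1) = C (M 0 1) * X 0 + C (M 1 1) * X 1 := by
    simp [polyAct, Fin.sum_univ_two]
  have hact : ∀ Q R : MvPolynomial (Fin 2) (ZMod p),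
      polyAct p M (Q * R) = polyAct p M Q * polyAct p M R := fun Q R => by
    simp [polyAct]
  have hsub : ∀ Q R : MvPolynomial (Fin 2) (ZMod p),
      polyAct p M (Q - R) = polyAct p M Q - polyAct p M R := fun Q R => by
    simp [polyAct]
  have hpow : ∀ (Q : MvPolynomial (Fin 2) (ZMod p)) (n : ℕ),
      polyAct p M (Q ^ n) = polyAct p M Q ^ n := fun Q n => by
    simp [polyAct]
  rw [hsub, hact, hact, hpow, hpow, h0, h1, frob, frob]
  simp only [map_sub, map_mul]
  ring

lemma polyAct_star_mem (M : Matrix (Fin 2) (Fin 2) (ZMod p)) {r : ℕ}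
    {P : MvPolynomial (Fin 2) (ZMod p)} (hP : P ∈ VpolyStar p r) :
    polyAct p M P ∈ VpolyStar p r := by
  rw [VpolyStar, Submodule.mem_inf] at hP ⊢
  obtain ⟨h1, h2⟩ := hP
  refine ⟨polyAct_mem p M h1, ?_⟩
  rw [Submodule.restrictScalars_mem, Ideal.mem_span_singleton] at h2 ⊢
  obtain ⟨Q, hQ⟩ := h2
  refine ⟨C (M 0 0 * M 1 1 - M 1 0 * M 0 1) * polyAct p M Q, ?_⟩
  have hact : ∀ Q R : MvPolynomial (Fin 2) (ZMod p),
      polyAct p M (Q * R) = polyAct p M Q * polyAct p M R := fun Q R => by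
    simp [polyAct]
  rw [hQ, hact, polyAct_det]
  ring

/-- The action of M on `V_r` (the restriction of `polyAct`). -/
noncomputable def actV (r : ℕ) (M : Matrix (Fin 2) (Fin 2) (ZMod p)) :
    Vpoly p r →ₗ[ZMod p] Vpoly p r :=
  (polyAct p M).restrict (fun _ hx => polyAct_mem p M hx)

/-- `V*_{2p−2}` as a submodule of `V_{2p−2}`. -/
noncomputable def VStarIn : Submodule (ZMod p) (Vpoly p (2 * p - 2)) :=
  (VpolyStar p (2 * p - 2)).comap (Vpoly p (2 * p - 2)).subtype

/-- The quotient representation `V_{2p−2}/V*_{2p−2}`. -/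
abbrev Qspace := Vpoly p (2 * p - 2) ⧸ VStarIn p

/-- The action of M on the quotient `V_{2p−2}/V*_{2p−2}`. -/
noncomputable def qAct (M : Matrix (Fin 2) (Fin 2) (ZMod p)) :
    Qspace p →ₗ[ZMod p] Qspace p :=
  Submodule.mapQ (VStarIn p) (VStarIn p) (actV p (2 * p - 2) M)
    (fun x hx => by
      simp only [VStarIn, Submodule.mem_comap] at hx ⊢
      exact polyAct_star_mem p M hx)

lemma memX0 (n : ℕ) : (X 0 : MvPolynomial (Fin 2) (ZMod p)) ^ n ∈ Vpoly p n := by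
  rw [Vpoly, mem_homogeneousSubmodule]
  simpa using (isHomogeneous_X (ZMod p) (0 : Fin 2)).pow n

lemma memc : ((X 0 : MvPolynomial (Fin 2) (ZMod p)) ^ (2 * p - 2)
    - X 0 ^ (p - 1) * X 1 ^ (p - 1) + X 1 ^ (2 * p - 2)) ∈ Vpoly p (2 * p - 2) := by
  have h2 : (2 : ℕ) ≤ p := (Fact.out : p.Prime).two_le
  rw [Vpoly, mem_homogeneousSubmodule]
  have hX0 : ((X 0 : MvPolynomial (Fin 2) (ZMod p)) ^ (2 * p - 2)).IsHomogeneous (2 * p - 2) := by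
    simpa using (isHomogeneous_X (ZMod p) (0 : Fin 2)).pow (2 * p - 2)
  have hX1 : ((X 1 : MvPolynomial (Fin 2) (ZMod p)) ^ (2 * p - 2)).IsHomogeneous (2 * p - 2) := by
    simpa using (isHomogeneous_X (ZMod p) (1 : Fin 2)).pow (2 * p - 2)
  have hmid : ((X 0 : MvPolynomial (Fin 2) (ZMod p)) ^ (p - 1)
      * X 1 ^ (p - 1)).IsHomogeneous (2 * p - 2) := by
    have h := (((isHomogeneous_X (ZMod p) (0 : Fin 2)).pow (p - 1)).mul
      ((isHomogeneous_X (ZMod p) (1 : Fin 2)).pow (p - 1)))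
    have he : 1 * (p - 1) + 1 * (p - 1) = 2 * p - 2 := by omega
    rwa [he] at h
  exact (hX0.sub hmid).add hX1

/-- The class of `X^{2p−2}` in `V_{2p−2}/V*_{2p−2}`. -/
noncomputable def xElt : Qspace p :=
  Submodule.Quotient.mk ⟨(X 0 : MvPolynomial (Fin 2) (ZMod p)) ^ (2 * p - 2), memX0 p (2 * p - 2)⟩

/-- The class of `X^{2p−2} − X^{p−1}Y^{p−1} + Y^{2p−2}` in `V_{2p−2}/V*_{2p−2}`. -/
noncomputable def cElt : Qspace p :=
  Submodule.Quotient.mk ⟨(X 0 : MvPolynomial (Fin 2) (ZMod p)) ^ (2 * p - 2)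
    - X 0 ^ (p - 1) * X 1 ^ (p - 1) + X 1 ^ (2 * p - 2), memc p⟩

noncomputable def liftP : MvPolynomial (Fin 2) (ZMod p) →ₗ[ZMod p] MvPolynomial (Fin 2) (ZMod p) where
  toFun P := P * X 0 ^ (p - 1) + C (eval ![0, 1] P) *
    (X 1 ^ (2 * p - 2) - X 0 ^ (p - 1) * X 1 ^ (p - 1))
  map_add' P Q := by simp only [map_add]; ring
  map_smul' c P := by
    simp only [smul_eq_C_mul, map_mul, eval_C, RingHom.id_apply]; ring

lemma liftP_apply (P : MvPolynomial (Fin 2) (ZMod p)) : liftP p P = P * X 0 ^ (p - 1) +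
    C (eval ![0, 1] P) * (X 1 ^ (2 * p - 2) - X 0 ^ (p - 1) * X 1 ^ (p - 1)) := rfl

lemma mem_mono (i j n : ℕ) (h : i + j = n) :
    (X 0 ^ i * X 1 ^ j : MvPolynomial (Fin 2) (ZMod p)) ∈ Vpoly p n := by
  rw [Vpoly, mem_homogeneousSubmodule]
  have h' := (((isHomogeneous_X (ZMod p) (0 : Fin 2)).pow i).mul
      ((isHomogeneous_X (ZMod p) (1 : Fin 2)).pow j))
  have he : 1 * i + 1 * j = n := by omega
  rwa [he] at h'

lemma liftP_mem {P : MvPolynomial (Fin 2) (ZMod p)} (hP : P ∈ Vpoly p (p - 1)) :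
    liftP p P ∈ Vpoly p (2 * p - 2) := by
  have h2 : (2 : ℕ) ≤ p := (Fact.out : p.Prime).two_le
  rw [liftP_apply]
  refine Submodule.add_mem _ ?_ ?_
  · rw [Vpoly, mem_homogeneousSubmodule] at hP ⊢
    have h := hP.mul ((isHomogeneous_X (ZMod p) (0 : Fin 2)).pow (p - 1))
    have he : p - 1 + 1 * (p - 1) = 2 * p - 2 := by omega
    rwa [he] at h
  · rw [← smul_eq_C_mul]
    refine Submodule.smul_mem _ _ (Submodule.sub_mem _ ?_ (mem_mono p _ _ _ (by omega)))
    simpa using mem_mono p 0 (2 * p - 2) (2 * p - 2) (by omega)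

/-- Every monomial expression generates: homogeneous polynomials are spanned by `X^i Y^j`. -/
lemma Vpoly_induction {n : ℕ} (S : Submodule (ZMod p) (MvPolynomial (Fin 2) (ZMod p)))
    (h : ∀ i j, i + j = n → (X 0 ^ i * X 1 ^ j : MvPolynomial (Fin 2) (ZMod p)) ∈ S)
    {P : MvPolynomial (Fin 2) (ZMod p)} (hP : P ∈ Vpoly p n) : P ∈ S := by
  rw [Vpoly, mem_homogeneousSubmodule] at hP
  rw [← support_sum_monomial_coeff P]
  refine Submodule.sum_mem _ fun d hd => ?_
  have hd' := hP (mem_support_iff.mp hd)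
  rw [monomial_eq, ← smul_eq_C_mul]
  refine Submodule.smul_mem _ _ ?_
  rw [Finsupp.prod_fintype _ _ (by simp), Fin.prod_univ_two]
  apply h
  rw [← hd', Finsupp.weight_apply, Finsupp.sum_fintype _ _ (by simp), Fin.sum_univ_two]
  simp

lemma eval_homog {n : ℕ} {P : MvPolynomial (Fin 2) (ZMod p)} (hP : P ∈ Vpoly p n)
    (y : ZMod p) : eval ![0, y] P = y ^ n * eval ![0, 1] P := by
  let S : Submodule (ZMod p) (MvPolynomial (Fin 2) (ZMod p)) :=
    { carrier := {P | eval ![0, y] P = y ^ n * eval ![0, 1] P}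
      zero_mem' := by simp
      add_mem' := by
        intro a b ha hb
        simp only [Set.mem_ofPred_eq, map_add] at *
        rw [ha, hb]; ring
      smul_mem' := by
        intro c a ha
        simp only [Set.mem_ofPred_eq, smul_eval] at *
        rw [ha]; ring }
  refine Vpoly_induction p S ?_ hP
  intro i j hij
  change eval ![0, y] _ = y ^ n * eval ![0, 1] _
  rcases Nat.eq_zero_or_pos i with rfl | hi
  · simp at hij; subst hij; simp
  · simp [zero_pow hi.ne']

lemma eval_liftP {P : MvPolynomial (Fin 2) (ZMod p)} (hP : P ∈ Vpoly p (p - 1))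
    (v : Fin 2 → ZMod p) : eval v (liftP p P) = eval v P := by
  have h2 : (2 : ℕ) ≤ p := (Fact.out : p.Prime).two_le
  have hp1 : p - 1 ≠ 0 := by omega
  rw [liftP_apply]
  simp only [map_add, map_mul, map_pow, eval_X, eval_C, map_sub]
  have e2 : 2 * p - 2 = (p - 1) + (p - 1) := by omega
  have key : ∀ x : ZMod p, x ^ (2 * p - 2) = x ^ (p - 1) := by
    intro x
    rw [e2, pow_add]
    by_cases hx : x = 0
    · simp [hx, hp1]
    · simp [ZMod.pow_card_sub_one_eq_one hx]
  rw [key]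
  by_cases hx : v 0 = 0
  · have hv : v = ![0, v 1] := by
      ext i; fin_cases i <;> simp [hx]
    have := eval_homog p hP (v 1)
    rw [← hv] at this
    rw [this, hx]; simp [hp1]; ring
  · simp [ZMod.pow_card_sub_one_eq_one hx]

lemma eval_theta (v : Fin 2 → ZMod p) {Q : MvPolynomial (Fin 2) (ZMod p)}
    (hQ : ((X 0 : MvPolynomial (Fin 2) (ZMod p)) ^ p * X 1 - X 0 * X 1 ^ p) ∣ Q) :
    eval v Q = 0 := by
  obtain ⟨R, rfl⟩ := hQ
  simp [ZMod.pow_card]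

/-- The normal form modulo the ideal generated by `X^p Y - X Y^p`. -/
lemma normal_form {Q : MvPolynomial (Fin 2) (ZMod p)} (hQ : Q ∈ Vpoly p (2 * p - 2)) :
    ∃ P ∈ Vpoly p (p - 1), ∃ s : ZMod p,
      ((X 0 : MvPolynomial (Fin 2) (ZMod p)) ^ p * X 1 - X 0 * X 1 ^ p) ∣
        Q - (liftP p P + C s * (X 0 ^ (p - 1) * X 1 ^ (p - 1))) := by
  have h2 : (2 : ℕ) ≤ p := (Fact.out : p.Prime).two_le
  let S : Submodule (ZMod p) (MvPolynomial (Fin 2) (ZMod p)) :=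
    { carrier := {Q | ∃ P ∈ Vpoly p (p - 1), ∃ s : ZMod p,
      ((X 0 : MvPolynomial (Fin 2) (ZMod p)) ^ p * X 1 - X 0 * X 1 ^ p) ∣
        Q - (liftP p P + C s * (X 0 ^ (p - 1) * X 1 ^ (p - 1)))}
      zero_mem' := ⟨0, Submodule.zero_mem _, 0, by simp⟩
      add_mem' := by
        rintro a b ⟨P, hP, s, h⟩ ⟨P', hP', s', h'⟩
        refine ⟨P + P', Submodule.add_mem _ hP hP', s + s', ?_⟩
        convert dvd_add h h' using 1
        simp only [map_add]; ring
      smul_mem' := by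
        rintro c a ⟨P, hP, s, h⟩
        refine ⟨c • P, Submodule.smul_mem _ _ hP, c * s, ?_⟩
        convert Dvd.dvd.mul_left h (C c) using 1
        rw [map_smul]
        simp only [smul_eq_C_mul, map_mul]; ring }
  refine Vpoly_induction p S ?_ hQ
  intro i j hij
  change ∃ P ∈ Vpoly p (p - 1), ∃ s : ZMod p, _
  rcases Nat.eq_zero_or_pos i with rfl | hi
  · refine ⟨X 0 ^ 0 * X 1 ^ (p - 1), mem_mono p _ _ _ (by omega), 0, ?_⟩
    have : j = 2 * p - 2 := by omega
    subst this
    rw [liftP_apply]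
    simp only [map_mul, map_pow, eval_X]
    simp
    ring_nf
    simp
  · by_cases hm : i = p - 1
    · refine ⟨0, Submodule.zero_mem _, 1, ?_⟩
      have : j = p - 1 := by omega
      simp [hm, this]
    · by_cases hlt : i < p - 1
      · refine ⟨X 0 ^ i * X 1 ^ (p - 1 - i), mem_mono p _ _ _ (by omega), 0, ?_⟩
        refine ⟨-(X 0 ^ (i - 1) * X 1 ^ (p - 2 - i)), ?_⟩
        rw [liftP_apply]
        simp only [map_mul, map_pow, eval_X]
        obtain ⟨a, rfl⟩ : ∃ a, i = a + 1 := ⟨i - 1, by omega⟩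
        obtain ⟨b, hb⟩ : ∃ b, p = a + b + 3 := ⟨p - a - 3, by omega⟩
        have e1 : p - 1 - (a + 1) = b + 1 := by omega
        have e2 : p - 2 - (a + 1) = b := by omega
        have e3 : p - 1 = a + b + 2 := by omega
        have e4 : j = a + 2 * b + 3 := by omega
        have e5 : 2 * p - 2 = 2 * a + 2 * b + 4 := by omega
        have e6 : (X 0 ^ p : MvPolynomial (Fin 2) (ZMod p)) = X 0 ^ (a + b + 3) := by rw [← hb]
        have e7 : (X 1 ^ p : MvPolynomial (Fin 2) (ZMod p)) = X 1 ^ (a + b + 3) := by rw [← hb]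
        rw [e1, e2, e3, e4, e5, e6, e7]
        simp
        ring
      · refine ⟨X 0 ^ (i - (p - 1)) * X 1 ^ j, mem_mono p _ _ _ (by omega), 0, ?_⟩
        rw [liftP_apply]
        have e : i - (p - 1) ≠ 0 := by omega
        have e' : (X 0 ^ i : MvPolynomial (Fin 2) (ZMod p)) =
          X 0 ^ (i - (p - 1)) * X 0 ^ (p - 1) := by rw [← pow_add]; congr 1; omega
        simp only [map_mul, map_pow, eval_X]
        rw [e']
        simp [e]
        ring_nf
        simp

lemma sum_low {P : MvPolynomial (Fin 2) (ZMod p)} (hP : P ∈ Vpoly p (p - 1)) :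
    ∑ v : Fin 2 → ZMod p, eval v P = 0 := by
  have h2 : (2 : ℕ) ≤ p := (Fact.out : p.Prime).two_le
  rw [Vpoly, mem_homogeneousSubmodule] at hP
  apply MvPolynomial.sum_eval_eq_zero
  rw [ZMod.card, Fintype.card_fin]
  have := hP.totalDegree_le
  omega

lemma sum_mid : ∑ v : Fin 2 → ZMod p,
    eval v (X 0 ^ (p - 1) * X 1 ^ (p - 1) : MvPolynomial (Fin 2) (ZMod p)) = 1 := by
  have h1 : ∑ x : ZMod p, x ^ (p - 1) = -1 := by
    have := FiniteField.sum_pow_units (ZMod p) (p - 1)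
    simp only [ZMod.pow_card_sub_one]
    rw [Finset.sum_ite]
    simp [Finset.filter_ne', Finset.card_erase_of_mem, ZMod.card,
      Nat.cast_sub (Fact.out : p.Prime).one_le]
  rw [← (finTwoArrowEquiv (ZMod p)).symm.sum_comp, Fintype.sum_prod_type]
  simp only [finTwoArrowEquiv_symm_apply, map_mul, map_pow, eval_X]
  simp [← Finset.mul_sum, ← Finset.sum_mul, h1]

lemma low_inj {P : MvPolynomial (Fin 2) (ZMod p)} (hP : P ∈ Vpoly p (p - 1))
    (h : ∀ v, eval v P = 0) : P = 0 := by
  rw [Vpoly, mem_homogeneousSubmodule] at hP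
  apply MvPolynomial.eq_zero_of_eval_eq_zero _ _ P h
  rw [mem_restrictDegree_iff_sup, ZMod.card]
  intro i
  have h1 : degreeOf i P ≤ totalDegree P := degreeOf_le_totalDegree P i
  rw [degreeOf_def] at h1
  convert h1.trans hP.totalDegree_le

lemma mem_star_iff (Q : Vpoly p (2 * p - 2)) : Q ∈ VStarIn p ↔
    ((X 0 : MvPolynomial (Fin 2) (ZMod p)) ^ p * X 1 - X 0 * X 1 ^ p) ∣ Q.1 := by
  simp only [VStarIn, Submodule.mem_comap, VpolyStar, Submodule.mem_inf,
    Submodule.restrictScalars_mem, Ideal.mem_span_singleton, Submodule.subtype_apply]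
  exact ⟨fun h => h.2, fun h => ⟨Q.2, h⟩⟩

lemma sum_nf {Q P : MvPolynomial (Fin 2) (ZMod p)} {s : ZMod p} (hP : P ∈ Vpoly p (p - 1))
    (h : ((X 0 : MvPolynomial (Fin 2) (ZMod p)) ^ p * X 1 - X 0 * X 1 ^ p) ∣
        Q - (liftP p P + C s * (X 0 ^ (p - 1) * X 1 ^ (p - 1)))) :
    ∑ v : Fin 2 → ZMod p, eval v Q = s := by
  have h1 : ∀ v, eval v Q = eval v P +
      s * eval v (X 0 ^ (p - 1) * X 1 ^ (p - 1) : MvPolynomial (Fin 2) (ZMod p)) := by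
    intro v
    have := eval_theta p v h
    rw [map_sub, map_add, map_mul (eval v) (C s), eval_C, eval_liftP p hP, sub_eq_zero] at this
    exact this
  simp only [h1, Finset.sum_add_distrib, ← Finset.mul_sum]
  rw [sum_low p hP, sum_mid]; ring

lemma mem_star_iff_eval (Q : Vpoly p (2 * p - 2)) : Q ∈ VStarIn p ↔ ∀ v, eval v Q.1 = 0 := by
  rw [mem_star_iff]
  refine ⟨fun h v => eval_theta p v h, fun h => ?_⟩
  obtain ⟨P, hP, s, hs⟩ := normal_form p Q.2
  have hs0 := sum_nf p hP hs
  simp only [h, Finset.sum_const_zero] at hs0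
  subst hs0
  have hP0 : P = 0 := by
    apply low_inj p hP
    intro v
    have := eval_theta p v hs
    simpa [h v, eval_liftP p hP] using this
  subst hP0
  simpa using hs

lemma eval_polyAct (M : Matrix (Fin 2) (Fin 2) (ZMod p)) (v : Fin 2 → ZMod p)
    (P : MvPolynomial (Fin 2) (ZMod p)) :
    eval v (polyAct p M P) = eval (Matrix.vecMul v M) P := by
  have : (eval v).comp (aeval fun i => ∑ j, C (M j i) * X j :
      MvPolynomial (Fin 2) (ZMod p) →ₐ[ZMod p] MvPolynomial (Fin 2) (ZMod p)).toRingHom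
      = eval (Matrix.vecMul v M) := by
    apply MvPolynomial.ringHom_ext
    · intro r; simp
    · intro i
      simp [Matrix.vecMul, dotProduct, mul_comm]
  exact congrArg (fun f => f P) this

noncomputable def iotaV : Vpoly p (p - 1) →ₗ[ZMod p] Vpoly p (2 * p - 2) :=
  (liftP p).restrict (fun _ h => liftP_mem p h)

noncomputable def sumV : Vpoly p (2 * p - 2) →ₗ[ZMod p] ZMod p where
  toFun Q := ∑ v : Fin 2 → ZMod p, eval v Q.1
  map_add' P Q := by simp [Finset.sum_add_distrib]
  map_smul' c P := by simp [Finset.mul_sum]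

lemma sumV_ker : VStarIn p ≤ LinearMap.ker (sumV p) := by
  intro Q hQ
  rw [mem_star_iff_eval] at hQ
  simp [LinearMap.mem_ker, sumV, hQ]

/-- There is a short exact sequence of GL₂(𝔽_p)-representations
`0 → V_{p−1} → V_{2p−2}/V*_{2p−2} → V_0 → 0`, where the first map is the injective
equivariant map ι with ι(X^{p−1}) = class of X^{2p−2}, and the quotient by its image is
the trivial representation V₀ (realized as 𝔽_p with trivial GL₂(𝔽_p)-action). -/
theorem stmt2 (p : ℕ) [Fact p.Prime] :
    ∃ (ι : Vpoly p (p - 1) →ₗ[ZMod p] Qspace p) (π : Qspace p →ₗ[ZMod p] ZMod p),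
      -- ι is injective
      Function.Injective ι ∧
      -- ι is GL₂(𝔽_p)-equivariant
      (∀ (g : GL (Fin 2) (ZMod p)) (P : Vpoly p (p - 1)),
        ι (actV p (p - 1) (g : Matrix (Fin 2) (Fin 2) (ZMod p)) P) =
          qAct p (g : Matrix (Fin 2) (Fin 2) (ZMod p)) (ι P)) ∧
      -- ι(X^{p−1}) = class of X^{2p−2}
      ι ⟨(X 0 : MvPolynomial (Fin 2) (ZMod p)) ^ (p - 1), memX0 p (p - 1)⟩ = xElt p ∧
      -- π is surjective with kernel exactly the image of ι (exactness)
      Function.Surjective π ∧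
      LinearMap.ker π = LinearMap.range ι ∧
      -- π is equivariant onto the trivial representation V₀
      (∀ (g : GL (Fin 2) (ZMod p)) (x : Qspace p),
        π (qAct p (g : Matrix (Fin 2) (Fin 2) (ZMod p)) x) = π x) := by
  have h2 : (2 : ℕ) ≤ p := (Fact.out : p.Prime).two_le
  refine ⟨(VStarIn p).mkQ.comp (iotaV p), (VStarIn p).liftQ (sumV p) (sumV_ker p),
    ?_, ?_, ?_, ?_, ?_, ?_⟩
  · rw [← LinearMap.ker_eq_bot, LinearMap.ker_eq_bot']
    intro P hP
    rw [LinearMap.comp_apply, Submodule.mkQ_apply, Submodule.Quotient.mk_eq_zero,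
      mem_star_iff_eval] at hP
    apply Subtype.ext
    apply low_inj p P.2
    intro v
    rw [← eval_liftP p P.2]
    exact hP v
  · intro g P
    change Submodule.Quotient.mk _ = Submodule.Quotient.mk _
    rw [Submodule.Quotient.eq, mem_star_iff_eval]
    intro v
    change eval v (liftP p (polyAct p g P.1) - polyAct p g (liftP p P.1)) = 0
    rw [map_sub, eval_liftP p (polyAct_mem p _ P.2), eval_polyAct, eval_polyAct,
      eval_liftP p P.2, sub_self]
  · change Submodule.Quotient.mk _ = Submodule.Quotient.mk _
    congr 1
    apply Subtype.ext
    change liftP p (X 0 ^ (p - 1)) = X 0 ^ (2 * p - 2)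
    have hp1 : p - 1 ≠ 0 := by omega
    rw [liftP_apply, ← pow_add]
    have e : p - 1 + (p - 1) = 2 * p - 2 := by omega
    simp [hp1, e]
  · intro c
    refine ⟨c • Submodule.Quotient.mk ⟨_, mem_mono p (p - 1) (p - 1) (2 * p - 2) (by omega)⟩, ?_⟩
    rw [map_smul]
    change c • (∑ v : Fin 2 → ZMod p, _) = c
    rw [sum_mid]; simp
  · apply le_antisymm
    · intro x hx
      obtain ⟨Q, rfl⟩ := Submodule.Quotient.mk_surjective _ x
      have hx' : ∑ v : Fin 2 → ZMod p, eval v Q.1 = 0 := hx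
      obtain ⟨P, hP, s, hs⟩ := normal_form p Q.2
      have hs0 := sum_nf p hP hs
      rw [hx'] at hs0
      subst hs0
      refine ⟨⟨P, hP⟩, ?_⟩
      symm
      change Submodule.Quotient.mk _ = Submodule.Quotient.mk _
      rw [Submodule.Quotient.eq, mem_star_iff]
      change _ ∣ Q.1 - liftP p P
      simpa using hs
    · rintro _ ⟨P, rfl⟩
      change ∑ v : Fin 2 → ZMod p, eval v (liftP p P.1) = 0
      simp only [eval_liftP p P.2]
      exact sum_low p P.2
  · intro g x
    obtain ⟨Q, rfl⟩ := Submodule.Quotient.mk_surjective _ x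
    change ∑ v : Fin 2 → ZMod p, eval v (polyAct p g Q.1) = ∑ v : Fin 2 → ZMod p, eval v Q.1
    simp only [eval_polyAct]
    apply Fintype.sum_bijective (fun v => Matrix.vecMul v (g : Matrix (Fin 2) (Fin 2) (ZMod p)))
    · refine Function.bijective_iff_has_inverse.mpr
        ⟨fun v => Matrix.vecMul v ((g⁻¹ : GL (Fin 2) (ZMod p)) : Matrix _ _ _), ?_, ?_⟩
      · intro v
        simp only [Matrix.vecMul_vecMul, Units.mul_inv, Matrix.vecMul_one]
      · intro v
        simp only [Matrix.vecMul_vecMul, Units.inv_mul, Matrix.vecMul_one]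
    · intro v; rfl
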